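/- Connection formula for the Gauss hypergeometric function at γ = α + β: for 0 < w < 1 and α, β with positive real part (and α, β not nonpositive integers), ₂F₁(α, β; α+β; w) = Γ(α+β)/(Γ(α)Γ(β)) · [ −log(1−w)·₂F₁(α, β; 1; 1−w) − Σ_{m=0}^∞ (α)_m(β)_m/(m!)² · (ψ(α+m) + ψ(β+m) − 2ψ(1+m))·(1−w)^m ]. -/

import Mathlib

open Complex

/-- Gauss hypergeometric function `₂F₁(α, β; γ; w)` as a power series. -/
noncomputable def hyp2F1 (α β γ w : ℂ) : ℂ :=
  ∑' m : ℕ, (ascPochhammer ℂ m).eval α * (ascPochhammer ℂ m).eval β /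
    ((ascPochhammer ℂ m).eval γ * Nat.factorial m) * w ^ m

/-- Complex digamma function `ψ = Γ'/Γ`. -/
noncomputable def digammaC (z : ℂ) : ℂ := deriv Complex.Gamma z / Complex.Gamma z

/-!
Put `z = 1 - w`. On the lens `|z| < 1`, `|1 - z| < 1` the functions `₂F₁(α, β; α + β; 1 - z)`,
`u = ₂F₁(α, β; 1; z)` and `log z · u + v`, with `v` the digamma series of the connection formula,
solve the same hypergeometric equation, so the difference `h` of the two sides (after
multiplication by `B(α, β)`) does too. The Wronskian of `h` and `u` is `C / (z (1 - z) ^ (α + β))`;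
if `h(t) → 0` as `t → 0⁺`, then `t (h / u)'(t)` tends to `C` while `h / u` converges, which forces
`C = 0`, and then `h = 0`.

The limit of `h` comes from Euler's integral: the difference of the Euler integrals with parameters
`(α, β)` and `(α, 1)` converges as `w → 1⁻` to Gauss's integral
`∫₀¹ (t ^ (β - 1) - 1) / (1 - t) dt = ψ(1) - ψ(β)`. Applying this twice replaces both parameters by
`1`, where `w · ₂F₁(1, 1; 2; w) = -log(1 - w)`.
-/

section PowerSeries

open FormalMultilinearSeries Filter Topology Asymptotics

variable {𝕜 : Type*} [NontriviallyNormedField 𝕜] {e : ℕ → 𝕜}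

theorem mem_eball_zero_one_iff {E : Type*} [SeminormedAddCommGroup E] {x : E} :
    x ∈ Metric.eball (0 : E) 1 ↔ ‖x‖ < 1 := by
  rw [mem_eball_zero_iff, ← ofReal_norm, ENNReal.ofReal_lt_one]

theorem hasFPowerSeriesOnBall_tsum_mul_pow [CompleteSpace 𝕜] {r : ENNReal} (hr : 0 < r)
    (he : r ≤ (ofScalars 𝕜 e).radius) :
    HasFPowerSeriesOnBall (fun z ↦ ∑' n, e n * z ^ n) (ofScalars 𝕜 e) 0 r := by
  have h := ((ofScalars 𝕜 e).hasFPowerSeriesOnBall (hr.trans_le he)).mono hr he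
  convert h using 1
  ext z
  simp [FormalMultilinearSeries.sum, mul_comm]

theorem hasSum_of_hasFPowerSeriesOnBall_ofScalars {f : 𝕜 → 𝕜} {r : ENNReal}
    (hf : HasFPowerSeriesOnBall f (ofScalars 𝕜 e) 0 r) {z : 𝕜} (hz : z ∈ Metric.eball 0 r) :
    HasSum (fun n ↦ e n * z ^ n) (f z) := by
  simpa [mul_comm] using hf.hasSum hz

theorem hasFPowerSeriesOnBall_deriv_ofScalars [CompleteSpace 𝕜] {f : 𝕜 → 𝕜} {x : 𝕜}
    {r : ENNReal} (hf : HasFPowerSeriesOnBall f (ofScalars 𝕜 e) x r) :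
    HasFPowerSeriesOnBall (deriv f) (ofScalars 𝕜 fun n ↦ ((n : 𝕜) + 1) * e (n + 1)) x r := by
  convert! (ContinuousLinearMap.apply 𝕜 𝕜 (1 : 𝕜)).comp_hasFPowerSeriesOnBall hf.fderiv
  ext n
  simp

theorem hasSum_natCast_mul_mul_pow {z s : 𝕜}
    (h : HasSum (fun n : ℕ ↦ ((n : 𝕜) + 1) * e (n + 1) * z ^ n) s) :
    HasSum (fun n : ℕ ↦ n * e n * z ^ n) (z * s) := by
  rw [← hasSum_nat_add_iff' 1]
  simpa [pow_succ, mul_comm, mul_assoc, mul_left_comm] using h.mul_left z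

theorem radius_mul_radius_le_radius_ofScalars_mul (e e' : ℕ → 𝕜) :
    (ofScalars 𝕜 e).radius * (ofScalars 𝕜 e').radius ≤ (ofScalars 𝕜 (e * e')).radius := by
  refine ENNReal.mul_le_of_forall_lt fun r hr s hs ↦ ?_
  lift r to NNReal using hr.ne_top
  lift s to NNReal using hs.ne_top
  obtain ⟨C, hC, hCr⟩ := norm_mul_pow_le_of_lt_radius _ hr
  obtain ⟨D, -, hDs⟩ := norm_mul_pow_le_of_lt_radius _ hs
  rw [← ENNReal.coe_mul]
  refine le_radius_of_bound _ (C * D) fun n ↦ ?_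
  calc ‖ofScalars 𝕜 (e * e') n‖ * ((r * s : NNReal) : ℝ) ^ n
      = (‖ofScalars 𝕜 e n‖ * (r : ℝ) ^ n) * (‖ofScalars 𝕜 e' n‖ * (s : ℝ) ^ n) := by
        simp only [ofScalars_norm, Pi.mul_apply, norm_mul, NNReal.coe_mul, mul_pow]
        ring
    _ ≤ C * D := mul_le_mul (hCr n) (hDs n) (by positivity) hC.le

theorem one_le_radius_ofScalars_of_isBigO_pow {k : ℕ}
    (he : e =O[atTop] fun n ↦ (n : ℝ) ^ k) : 1 ≤ (ofScalars 𝕜 e).radius := by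
  refine le_of_forall_lt_imp_le_of_dense fun r hr ↦ ?_
  lift r to NNReal using hr.ne_top
  have hr1 : |(r : ℝ)| < 1 := by simpa using hr
  refine le_radius_of_isBigO (ofScalars 𝕜 e) ?_
  have hpow := tendsto_pow_const_mul_const_pow_of_abs_lt_one k hr1
  exact ((he.norm_left.mul (isBigO_refl (fun n ↦ (r : ℝ) ^ n) atTop)).trans
    (hpow.isBigO_one ℝ)).congr_left fun n ↦ by rw [ofScalars_norm]

theorem isBigO_natCast_of_norm_sub_le {E : Type*} [SeminormedAddCommGroup E] {u : ℕ → E} {C : ℝ}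
    (hu : ∀ n, ‖u (n + 1) - u n‖ ≤ C) : u =O[atTop] fun n ↦ (n : ℝ) := by
  refine .of_bound (‖u 0‖ + C) ?_
  filter_upwards [eventually_ge_atTop 1] with n hn
  have hn' : (1 : ℝ) ≤ n := by exact_mod_cast hn
  have h : dist (u 0) (u n) ≤ ∑ _i ∈ Finset.range n, C :=
    dist_le_range_sum_of_dist_le n fun {k} _ ↦ by
      rw [dist_comm, dist_eq_norm]
      exact hu k
  rw [Finset.sum_const, Finset.card_range, nsmul_eq_mul, dist_comm, dist_eq_norm] at h
  rw [Real.norm_natCast]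
  nlinarith [norm_le_norm_add_norm_sub' (u n) (u 0), norm_nonneg (u 0)]

end PowerSeries

section HypergeometricOp

/-- The Gauss hypergeometric differential operator
`z (1 - z) f'' + (c - (a + b + 1) z) f' - a b f`, whose kernel contains `₂F₁(a, b; c; z)`. -/
noncomputable def hypergeometricOp (a b c : ℂ) (f : ℂ → ℂ) (z : ℂ) : ℂ :=
  z * (1 - z) * deriv (deriv f) z + (c - (a + b + 1) * z) * deriv f z - a * b * f z

open FormalMultilinearSeries

variable {a b c z : ℂ} {f g : ℂ → ℂ}

theorem hypergeometricOp_comp_one_sub (a b c : ℂ) (f : ℂ → ℂ) (z : ℂ) :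
    hypergeometricOp a b c (fun z ↦ f (1 - z)) z =
      hypergeometricOp a b (a + b + 1 - c) f (1 - z) := by
  have h : deriv (fun z ↦ f (1 - z)) = fun z ↦ -deriv f (1 - z) := by
    ext z
    exact deriv_comp_const_sub f 1 z
  simp only [hypergeometricOp, h, deriv.fun_neg, deriv_comp_const_sub]
  ring

theorem hypergeometricOp_const_mul (k : ℂ) :
    hypergeometricOp a b c (fun z ↦ k * f z) z = k * hypergeometricOp a b c f z := by
  have h : deriv (fun z ↦ k * f z) = fun z ↦ k * deriv f z := by
    ext z
    exact deriv_const_mul_field k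
  simp only [hypergeometricOp, h, deriv_const_mul_field]
  ring

theorem hypergeometricOp_add (hf : AnalyticAt ℂ f z) (hg : AnalyticAt ℂ g z) :
    hypergeometricOp a b c (fun z ↦ f z + g z) z =
      hypergeometricOp a b c f z + hypergeometricOp a b c g z := by
  have h : deriv (fun z ↦ f z + g z) =ᶠ[nhds z] fun z ↦ deriv f z + deriv g z := by
    filter_upwards [hf.eventually_analyticAt, hg.eventually_analyticAt] with x hfx hgx
    exact deriv_fun_add hfx.differentiableAt hgx.differentiableAt
  have h₂ : deriv (fun z ↦ deriv f z + deriv g z) z = deriv (deriv f) z + deriv (deriv g) z :=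
    deriv_fun_add hf.deriv.differentiableAt hg.deriv.differentiableAt
  simp only [hypergeometricOp, h.deriv_eq, h.eq_of_nhds, h₂]
  ring

theorem hypergeometricOp_log_mul (hz : z ∈ slitPlane) (hf : AnalyticAt ℂ f z) :
    hypergeometricOp a b c (fun z ↦ log z * f z) z =
      log z * hypergeometricOp a b c f z + 2 * (1 - z) * deriv f z +
        ((c - 1) / z - (a + b)) * f z := by
  have hd {x : ℂ} (hx : x ∈ slitPlane) {g : ℂ → ℂ} (hg : AnalyticAt ℂ g x) :
      HasDerivAt (fun z ↦ log z * g z) (x⁻¹ * g x + log x * deriv g x) x :=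
    (hasDerivAt_log hx).mul hg.differentiableAt.hasDerivAt
  have h : deriv (fun z ↦ log z * f z) =ᶠ[nhds z] fun z ↦ z⁻¹ * f z + log z * deriv f z := by
    filter_upwards [isOpen_slitPlane.mem_nhds hz, hf.eventually_analyticAt] with x hx hfx
    exact (hd hx hfx).deriv
  have hz₀ : z ≠ 0 := slitPlane_ne_zero hz
  have h₂ := (((hasDerivAt_inv hz₀).mul hf.differentiableAt.hasDerivAt).add (hd hz hf.deriv)).deriv
  simp only [hypergeometricOp, h.deriv_eq, h.eq_of_nhds]
  refine (congrArg (z * (1 - z) * · + _ - _) h₂).trans ?_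
  field_simp
  ring

theorem hasSum_hypergeometricOp {e : ℕ → ℂ} (hf : HasFPowerSeriesOnBall f (ofScalars ℂ e) 0 1)
    (hz : ‖z‖ < 1) :
    HasSum (fun n : ℕ ↦ ((n + 1) * (n + c) * e (n + 1) - (n + a) * (n + b) * e n) * z ^ n)
      (hypergeometricOp a b c f z) := by
  have hz' : z ∈ Metric.eball (0 : ℂ) 1 := mem_eball_zero_one_iff.2 hz
  have hf' := hasFPowerSeriesOnBall_deriv_ofScalars hf
  have h₀ := hasSum_of_hasFPowerSeriesOnBall_ofScalars hf hz'
  have h₁ := hasSum_of_hasFPowerSeriesOnBall_ofScalars hf' hz'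
  have h₂ :=
    hasSum_of_hasFPowerSeriesOnBall_ofScalars (hasFPowerSeriesOnBall_deriv_ofScalars hf') hz'
  have hz₁ := hasSum_natCast_mul_mul_pow h₁
  have hz₂ := hasSum_natCast_mul_mul_pow (e := fun n ↦ (n + 1) * e (n + 1)) h₂
  have hzz₂ := hasSum_natCast_mul_mul_pow (e := fun n ↦ (n - 1) * e n) <|
    hz₂.congr_fun fun n ↦ by push_cast; ring
  have hop : hypergeometricOp a b c f z =
      z * deriv (deriv f) z - z * (z * deriv (deriv f) z) +
        (c * deriv f z - (a + b + 1) * (z * deriv f z)) - a * b * f z := by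
    simp only [hypergeometricOp]
    ring
  rw [hop]
  refine (((hz₂.sub hzz₂).add ((h₁.mul_left c).sub (hz₁.mul_left (a + b + 1)))).sub
    (h₀.mul_left (a * b))).congr_fun fun n ↦ ?_
  ring

end HypergeometricOp

section Solutions

open FormalMultilinearSeries Polynomial Filter Topology

variable {a b c z : ℂ}

theorem ne_neg_natCast_of_re_pos (ha : 0 < a.re) (n : ℕ) : a ≠ -n := by
  rintro rfl
  rw [neg_re, natCast_re] at ha
  linarith [(n.cast_nonneg : (0 : ℝ) ≤ n)]

theorem hyp2F1_eq_tsum (a b c : ℂ) :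
    hyp2F1 a b c = fun z ↦ ∑' n, ordinaryHypergeometricCoefficient a b c n * z ^ n := by
  ext z
  refine tsum_congr fun n ↦ ?_
  simp only [ordinaryHypergeometricCoefficient, div_eq_mul_inv, mul_inv]
  ring

theorem hyp2F1_comm (a b c : ℂ) : hyp2F1 a b c = hyp2F1 b a c := by
  ext z
  simp only [hyp2F1, mul_comm (eval a _)]

theorem one_le_radius_ordinaryHypergeometricSeries (a b c : ℂ) :
    1 ≤ (ordinaryHypergeometricSeries ℂ a b c).radius := by
  by_cases h : ∃ n : ℕ, a = -n ∨ b = -n ∨ c = -n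
  · obtain ⟨n, rfl | rfl | rfl⟩ := h
    · simp [ordinaryHypergeometric_radius_top_of_neg_nat₁]
    · simp [ordinaryHypergeometric_radius_top_of_neg_nat₂]
    · simp [ordinaryHypergeometric_radius_top_of_neg_nat₃]
  · push Not at h
    refine (ordinaryHypergeometricSeries_radius_eq_one ℂ a b c fun n ↦ ?_).ge
    simpa only [ne_eq, eq_comm (a := (n : ℂ)), neg_eq_iff_eq_neg] using h n

theorem hasFPowerSeriesOnBall_hyp2F1 (a b c : ℂ) :
    HasFPowerSeriesOnBall (hyp2F1 a b c) (ordinaryHypergeometricSeries ℂ a b c) 0 1 := by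
  rw [hyp2F1_eq_tsum]
  exact hasFPowerSeriesOnBall_tsum_mul_pow one_pos
    (one_le_radius_ordinaryHypergeometricSeries a b c)

theorem analyticOnNhd_hyp2F1 (a b c : ℂ) :
    AnalyticOnNhd ℂ (hyp2F1 a b c) (Metric.ball 0 1) := by
  simpa [← Metric.eball_ofReal] using (hasFPowerSeriesOnBall_hyp2F1 a b c).analyticOnNhd

theorem hyp2F1_zero (a b c : ℂ) : hyp2F1 a b c 0 = 1 := by
  rw [hyp2F1, tsum_eq_single 0 (by simp +contextual)]
  simp

theorem ordinaryHypergeometricCoefficient_succ (hc : ∀ n : ℕ, c ≠ -n) (n : ℕ) :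
    (n + 1) * (n + c) * ordinaryHypergeometricCoefficient a b c (n + 1) =
      (n + a) * (n + b) * ordinaryHypergeometricCoefficient a b c n := by
  have hn : (n : ℂ) + 1 ≠ 0 := n.cast_add_one_ne_zero
  have hcn : c + n ≠ 0 := by simpa [← eq_neg_iff_add_eq_zero] using hc n
  simp only [ordinaryHypergeometricCoefficient, ascPochhammer_succ_eval, Nat.factorial_succ,
    Nat.cast_mul, Nat.cast_add_one, mul_inv]
  field_simp
  ring

theorem hypergeometricOp_hyp2F1 (hc : ∀ n : ℕ, c ≠ -n) (hz : ‖z‖ < 1) :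
    hypergeometricOp a b c (hyp2F1 a b c) z = 0 := by
  refine (hasSum_hypergeometricOp (hasFPowerSeriesOnBall_hyp2F1 a b c) hz).unique ?_
  simp only [ordinaryHypergeometricCoefficient_succ hc, sub_self, zero_mul]
  exact hasSum_zero

theorem digammaC_eq_digamma : digammaC = digamma := rfl

theorem digammaC_add_one (ha : ∀ n : ℕ, a ≠ -n) : digammaC (a + 1) = digammaC a + a⁻¹ := by
  simpa [digammaC_eq_digamma] using digamma_apply_add_one a ha

theorem add_natCast_ne_neg_natCast (ha : ∀ n : ℕ, a ≠ -n) (m n : ℕ) : a + m ≠ -n := by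
  intro h
  exact ha (m + n) (by push_cast; linear_combination h)

/-- The factor `ψ(a + n) + ψ(b + n) - 2ψ(1 + n)` of the logarithmic companion of
`₂F₁(a, b; 1; z)`. -/
noncomputable def digammaFactor (a b : ℂ) (n : ℕ) : ℂ :=
  digammaC (a + n) + digammaC (b + n) - 2 * digammaC (1 + n)

/-- The holomorphic part `v` of the second Frobenius solution `log z · ₂F₁(a, b; 1; z) + v(z)` at
`0` of the hypergeometric equation with `c = 1`. -/
noncomputable def logCompanion (a b z : ℂ) : ℂ :=
  ∑' n : ℕ, (ascPochhammer ℂ n).eval a * (ascPochhammer ℂ n).eval b /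
    ((Nat.factorial n : ℂ) ^ 2) * digammaFactor a b n * z ^ n

theorem digammaFactor_succ (ha : ∀ n : ℕ, a ≠ -n) (hb : ∀ n : ℕ, b ≠ -n) (n : ℕ) :
    digammaFactor a b (n + 1) =
      digammaFactor a b n + ((a + n)⁻¹ + (b + n)⁻¹ - 2 * ((n : ℂ) + 1)⁻¹) := by
  have h₁ := add_natCast_ne_neg_natCast (ne_neg_natCast_of_re_pos (a := 1) (by simp)) n
  simp only [digammaFactor, Nat.cast_add_one, ← add_assoc,
    digammaC_add_one (add_natCast_ne_neg_natCast ha n),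
    digammaC_add_one (add_natCast_ne_neg_natCast hb n), digammaC_add_one h₁]
  rw [add_comm (1 : ℂ)]
  ring

theorem tendsto_inv_add_natCast (a : ℂ) :
    Tendsto (fun n : ℕ ↦ (a + n)⁻¹) atTop (𝓝 0) :=
  tendsto_inv₀_cobounded.comp <|
    (tendsto_const_add_cobounded a).comp tendsto_natCast_atTop_cobounded

theorem one_le_radius_digammaFactor (ha : ∀ n : ℕ, a ≠ -n) (hb : ∀ n : ℕ, b ≠ -n) :
    1 ≤ (ofScalars ℂ (digammaFactor a b)).radius := by
  have h : Tendsto (fun n : ℕ ↦ digammaFactor a b (n + 1) - digammaFactor a b n)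
      atTop (𝓝 0) := by
    simp only [digammaFactor_succ ha hb, add_sub_cancel_left]
    simpa [add_comm] using ((tendsto_inv_add_natCast a).add (tendsto_inv_add_natCast b)).sub
      ((tendsto_inv_add_natCast 1).const_mul 2)
  obtain ⟨C, hC⟩ := (Metric.isBounded_range_of_tendsto _ h).exists_norm_le
  refine one_le_radius_ofScalars_of_isBigO_pow (k := 1) ?_
  simpa using isBigO_natCast_of_norm_sub_le fun n ↦ hC _ ⟨n, rfl⟩

theorem hasFPowerSeriesOnBall_logCompanion (ha : ∀ n : ℕ, a ≠ -n) (hb : ∀ n : ℕ, b ≠ -n) :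
    HasFPowerSeriesOnBall (logCompanion a b)
      (ofScalars ℂ (ordinaryHypergeometricCoefficient a b 1 * digammaFactor a b)) 0 1 := by
  have hr :
      1 ≤ (ofScalars ℂ (ordinaryHypergeometricCoefficient a b 1 * digammaFactor a b)).radius :=
    le_trans (one_le_mul (one_le_radius_ordinaryHypergeometricSeries a b 1)
      (one_le_radius_digammaFactor ha hb)) (radius_mul_radius_le_radius_ofScalars_mul _ _)
  suffices h : logCompanion a b = fun z ↦
      ∑' n, (ordinaryHypergeometricCoefficient a b 1 * digammaFactor a b) n * z ^ n from
    h ▸ hasFPowerSeriesOnBall_tsum_mul_pow one_pos hr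
  ext z
  refine tsum_congr fun n ↦ ?_
  simp only [Pi.mul_apply, ordinaryHypergeometricCoefficient, ascPochhammer_eval_one,
    div_eq_mul_inv, sq, mul_inv]
  ring

theorem analyticOnNhd_logCompanion (ha : ∀ n : ℕ, a ≠ -n) (hb : ∀ n : ℕ, b ≠ -n) :
    AnalyticOnNhd ℂ (logCompanion a b) (Metric.ball 0 1) := by
  simpa [← Metric.eball_ofReal] using (hasFPowerSeriesOnBall_logCompanion ha hb).analyticOnNhd

theorem hypergeometricOp_logCompanion (ha : ∀ n : ℕ, a ≠ -n) (hb : ∀ n : ℕ, b ≠ -n)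
    (hz : ‖z‖ < 1) :
    hypergeometricOp a b 1 (logCompanion a b) z =
      (a + b) * hyp2F1 a b 1 z - 2 * (1 - z) * deriv (hyp2F1 a b 1) z := by
  have hz' : z ∈ Metric.eball (0 : ℂ) 1 := mem_eball_zero_one_iff.2 hz
  have hu := hasFPowerSeriesOnBall_hyp2F1 a b 1
  have h₀ := hasSum_of_hasFPowerSeriesOnBall_ofScalars hu hz'
  have h₁ :=
    hasSum_of_hasFPowerSeriesOnBall_ofScalars (hasFPowerSeriesOnBall_deriv_ofScalars hu) hz'
  have hz₁ := hasSum_natCast_mul_mul_pow h₁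
  have hrhs : (a + b) * hyp2F1 a b 1 z - 2 * (1 - z) * deriv (hyp2F1 a b 1) z =
      (a + b) * hyp2F1 a b 1 z - 2 * deriv (hyp2F1 a b 1) z +
        2 * (z * deriv (hyp2F1 a b 1) z) := by ring
  rw [hrhs]
  refine (hasSum_hypergeometricOp (hasFPowerSeriesOnBall_logCompanion ha hb) hz).unique <|
    (((h₀.mul_left (a + b)).sub (h₁.mul_left 2)).add (hz₁.mul_left 2)).congr_fun fun n ↦ ?_
  have hn : (n : ℂ) + 1 ≠ 0 := n.cast_add_one_ne_zero
  have han : a + n ≠ 0 := by simpa [← eq_neg_iff_add_eq_zero] using ha n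
  have hbn : b + n ≠ 0 := by simpa [← eq_neg_iff_add_eq_zero] using hb n
  have hrec := ordinaryHypergeometricCoefficient_succ (a := a) (b := b)
    (ne_neg_natCast_of_re_pos (a := 1) (by simp)) n
  simp only [Pi.mul_apply, digammaFactor_succ ha hb]
  linear_combination
    (digammaFactor a b n + (a + n)⁻¹ + (b + n)⁻¹) * z ^ n * hrec +
      (n + b) * ordinaryHypergeometricCoefficient a b 1 n * z ^ n * mul_inv_cancel₀ han +
      (n + a) * ordinaryHypergeometricCoefficient a b 1 n * z ^ n * mul_inv_cancel₀ hbn -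
      2 * (n + 1) * ordinaryHypergeometricCoefficient a b 1 (n + 1) * z ^ n * mul_inv_cancel₀ hn

theorem hypergeometricOp_log_mul_hyp2F1_add_logCompanion (ha : ∀ n : ℕ, a ≠ -n)
    (hb : ∀ n : ℕ, b ≠ -n) (hz : z ∈ slitPlane) (hz₁ : ‖z‖ < 1) :
    hypergeometricOp a b 1 (fun z ↦ log z * hyp2F1 a b 1 z + logCompanion a b z) z = 0 := by
  have hmem : z ∈ Metric.ball (0 : ℂ) 1 := by simpa using hz₁
  have hu := analyticOnNhd_hyp2F1 a b 1 z hmem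
  have hv := analyticOnNhd_logCompanion ha hb z hmem
  rw [hypergeometricOp_add ((analyticAt_clog hz).fun_mul hu) hv, hypergeometricOp_log_mul hz hu,
    hypergeometricOp_hyp2F1 (ne_neg_natCast_of_re_pos (by simp)) hz₁,
    hypergeometricOp_logCompanion ha hb hz₁]
  ring

end Solutions

section Uniqueness

open Filter Topology Metric

theorem eq_zero_of_tendsto_smul_deriv {E : Type*} [NormedAddCommGroup E] [NormedSpace ℝ E]
    {f f' : ℝ → E} {l C : E} (hd : ∀ᶠ t in 𝓝[>] 0, HasDerivAt f (f' t) t)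
    (hf : Tendsto f (𝓝[>] 0) (𝓝 l)) (hf' : Tendsto (fun t ↦ t • f' t) (𝓝[>] 0) (𝓝 C)) :
    C = 0 := by
  have hderiv : ∀ᶠ t in 𝓝[>] (0 : ℝ), HasDerivAt (fun t ↦ t • f t) (t • f' t + f t) t := by
    filter_upwards [hd] with t ht
    simpa using (hasDerivAt_id t).fun_smul ht
  have hlim : Tendsto (fun t ↦ t • f t) (𝓝[>] 0) (𝓝 ((0 : ℝ) • f 0)) := by
    simpa using (tendsto_id.mono_left nhdsWithin_le_nhds : Tendsto id (𝓝[>] (0 : ℝ)) _).smul hf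
  have h₀ : HasDerivWithinAt (fun t ↦ t • f t) (C + l) (Set.Ici 0) 0 :=
    hasDerivWithinAt_Ici_of_tendsto_deriv
      (s := {t | HasDerivAt (fun t ↦ t • f t) (t • f' t + f t) t} ∩ Set.Ioi 0)
      (fun t ht ↦ ht.1.differentiableAt.differentiableWithinAt)
      (hlim.mono_left (nhdsWithin_mono _ Set.inter_subset_right))
      (inter_mem hderiv self_mem_nhdsWithin)
      ((hf'.add hf).congr' (hderiv.mono fun t ht ↦ ht.deriv.symm))
  -- The right derivative of `t ↦ t f(t)` at `0` is the limit `C + l` of its derivatives, but also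
  -- the limit `l` of its slopes.
  have hslope : Tendsto (slope (fun t ↦ t • f t) 0) (𝓝[>] 0) (𝓝 (C + l)) := by
    simpa [hasDerivWithinAt_iff_tendsto_slope] using h₀
  have hl : Tendsto (slope (fun t ↦ t • f t) 0) (𝓝[>] 0) (𝓝 l) := by
    refine hf.congr' ?_
    filter_upwards [self_mem_nhdsWithin] with t (ht : 0 < t)
    simp [slope_def_module, smul_smul, ht.ne']
  simpa using tendsto_nhds_unique hslope hl

/-- The intersection of the discs of convergence of power series in `z` and in `1 - z`. -/
def lens : Set ℂ := ball 0 1 ∩ ball 1 1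

variable {a b c z : ℂ} {f g h u : ℂ → ℂ}

theorem isOpen_lens : IsOpen lens := isOpen_ball.inter isOpen_ball

theorem convex_lens : Convex ℝ lens := (convex_ball _ _).inter (convex_ball _ _)

theorem one_sub_mem_lens : 1 - z ∈ lens ↔ z ∈ lens := by
  simp [lens, dist_eq_norm, norm_sub_rev z 1, and_comm]

theorem lens_subset_slitPlane : lens ⊆ slitPlane := by
  rintro z ⟨-, hz⟩
  simpa using mem_slitPlane_of_norm_lt_one (mem_ball_iff_norm.1 hz)

theorem ofReal_mem_lens {t : ℝ} (ht : t ∈ Set.Ioo 0 1) : (t : ℂ) ∈ lens := by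
  constructor
  · simpa [abs_lt] using ⟨by linarith [ht.1], ht.2⟩
  · rw [mem_ball, ← ofReal_one, dist_eq_norm, ← ofReal_sub, norm_real, Real.norm_eq_abs, abs_lt]
    exact ⟨by linarith [ht.1], by linarith [ht.2]⟩

theorem eventually_ofReal_mem_lens : ∀ᶠ t : ℝ in 𝓝[>] 0, (t : ℂ) ∈ lens :=
  mem_of_superset (Ioo_mem_nhdsGT one_pos) fun _ ↦ ofReal_mem_lens

theorem tendsto_ofReal_nhdsGT_zero : Tendsto ((↑) : ℝ → ℂ) (𝓝[>] 0) (𝓝 0) :=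
  (continuous_ofReal.tendsto' 0 0 ofReal_zero).mono_left nhdsWithin_le_nhds

theorem tendsto_ofReal_nhdsGT_zero_nhdsNE : Tendsto ((↑) : ℝ → ℂ) (𝓝[>] 0) (𝓝[≠] 0) := by
  refine tendsto_nhdsWithin_iff.2 ⟨tendsto_ofReal_nhdsGT_zero, ?_⟩
  filter_upwards [self_mem_nhdsWithin] with t (ht : 0 < t)
  simpa using ht.ne'

theorem exists_wronskian_eq_of_hypergeometricOp_eq_zero {U : Set ℂ} (hU : IsOpen U)
    (hU' : IsPreconnected U) (hsub : U ⊆ slitPlane) (hsub' : ∀ z ∈ U, 1 - z ∈ slitPlane)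
    (hf : AnalyticOnNhd ℂ f U) (hg : AnalyticOnNhd ℂ g U)
    (hf₀ : ∀ z ∈ U, hypergeometricOp a b c f z = 0)
    (hg₀ : ∀ z ∈ U, hypergeometricOp a b c g z = 0) :
    ∃ C, ∀ z ∈ U, z ^ c * (1 - z) ^ (a + b + 1 - c) * (deriv f z * g z - f z * deriv g z) = C := by
  have hderiv : ∀ z ∈ U, HasDerivAt
      (fun z ↦ z ^ c * (1 - z) ^ (a + b + 1 - c) * (deriv f z * g z - f z * deriv g z)) 0 z := by
    intro z hz
    have hz₀ : z ≠ 0 := slitPlane_ne_zero (hsub hz)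
    have hz₁ : 1 - z ≠ 0 := slitPlane_ne_zero (hsub' z hz)
    have hpow := ((hasDerivAt_id z).cpow_const (c := c) (hsub hz)).mul
      (((hasDerivAt_id z).const_sub 1).cpow_const (c := a + b + 1 - c) (hsub' z hz))
    have hf' := (hf z hz).differentiableAt.hasDerivAt
    have hf'' := (hf z hz).deriv.differentiableAt.hasDerivAt
    have hg' := (hg z hz).differentiableAt.hasDerivAt
    have hg'' := (hg z hz).deriv.differentiableAt.hasDerivAt
    have hW := (hf''.mul hg').sub (hf'.mul hg'')
    refine (hpow.mul hW).congr_deriv ?_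
    have hfz := hf₀ z hz
    have hgz := hg₀ z hz
    simp only [hypergeometricOp] at hfz hgz
    simp only [id, Pi.mul_apply, Pi.sub_apply, cpow_sub _ _ hz₀, cpow_sub _ 1 hz₁, cpow_one]
    field_simp
    linear_combination z ^ c * (1 - z) ^ (a + b + 1 - c) * (g z * hfz - f z * hgz)
  exact hU.exists_is_const_of_deriv_eq_zero hU'
    (fun z hz ↦ (hderiv z hz).differentiableAt.differentiableWithinAt)
    fun z hz ↦ (hderiv z hz).deriv

theorem wronskian_eq_zero_of_tendsto_ofReal {l : ℂ} (hu : AnalyticOnNhd ℂ u lens)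
    (hu₀ : ∀ z ∈ lens, hypergeometricOp a b 1 u z = 0) (hu_cont : ContinuousAt u 0)
    (hu_ne : u 0 ≠ 0) (hh : AnalyticOnNhd ℂ h lens)
    (hh₀ : ∀ z ∈ lens, hypergeometricOp a b 1 h z = 0)
    (hlim : Tendsto (fun t : ℝ ↦ h t) (𝓝[>] 0) (𝓝 l)) (hz : z ∈ lens) :
    deriv h z * u z - h z * deriv u z = 0 := by
  obtain ⟨C, hC⟩ := exists_wronskian_eq_of_hypergeometricOp_eq_zero isOpen_lens
    convex_lens.isPreconnected lens_subset_slitPlane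
    (fun z hz ↦ lens_subset_slitPlane (one_sub_mem_lens.2 hz)) hh hu hh₀ hu₀
  have hu_lim : Tendsto (fun t : ℝ ↦ u t) (𝓝[>] 0) (𝓝 (u 0)) :=
    hu_cont.tendsto.comp tendsto_ofReal_nhdsGT_zero
  have hpow_lim : Tendsto (fun t : ℝ ↦ (1 - (t : ℂ)) ^ (a + b)) (𝓝[>] 0) (𝓝 1) := by
    have : ContinuousAt (fun z : ℂ ↦ (1 - z) ^ (a + b)) 0 :=
      (continuousAt_const.sub continuousAt_id).cpow continuousAt_const (by simp)
    simpa [Function.comp_def] using this.tendsto.comp tendsto_ofReal_nhdsGT_zero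
  have hderiv : ∀ᶠ t : ℝ in 𝓝[>] 0, HasDerivAt (fun t : ℝ ↦ h t / u t)
      ((deriv h t * u t - h t * deriv u t) / u t ^ 2) t := by
    filter_upwards [eventually_ofReal_mem_lens, hu_lim.eventually_ne hu_ne] with t ht hut
    exact ((hh t ht).differentiableAt.hasDerivAt.fun_div (hu t ht).differentiableAt.hasDerivAt
      hut).comp_ofReal
  have hmul : Tendsto (fun t : ℝ ↦ t • ((deriv h t * u t - h t * deriv u t) / u t ^ 2)) (𝓝[>] 0)
      (𝓝 (C / (1 * u 0 ^ 2))) := by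
    refine (tendsto_const_nhds.div (hpow_lim.mul (hu_lim.pow 2)) (by simpa)).congr' ?_
    filter_upwards [eventually_ofReal_mem_lens] with t ht
    have hpow : (1 - (t : ℂ)) ^ (a + b) ≠ 0 :=
      cpow_ne_zero_iff.2 (.inl (slitPlane_ne_zero (lens_subset_slitPlane (one_sub_mem_lens.2 ht))))
    rw [Pi.div_apply, ← hC t ht, cpow_one, add_sub_cancel_right, real_smul]
    field_simp
  have hC₀ : C = 0 := by
    simpa [hu_ne] using eq_zero_of_tendsto_smul_deriv hderiv (hlim.div hu_lim hu_ne) hmul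
  simpa [hC₀, slitPlane_ne_zero (lens_subset_slitPlane hz),
    slitPlane_ne_zero (lens_subset_slitPlane (one_sub_mem_lens.2 hz)), cpow_eq_zero_iff]
    using hC z hz

theorem eqOn_zero_of_hypergeometricOp_eq_zero_of_tendsto_ofReal (hu : AnalyticOnNhd ℂ u lens)
    (hu₀ : ∀ z ∈ lens, hypergeometricOp a b 1 u z = 0) (hu_cont : ContinuousAt u 0)
    (hu_ne : u 0 ≠ 0) (hh : AnalyticOnNhd ℂ h lens)
    (hh₀ : ∀ z ∈ lens, hypergeometricOp a b 1 h z = 0)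
    (hlim : Tendsto (fun t : ℝ ↦ h t) (𝓝[>] 0) (𝓝 0)) : Set.EqOn h 0 lens := by
  obtain ⟨r, hr, hr_ne⟩ := Metric.eventually_nhds_iff_ball.1 (hu_cont.eventually_ne hu_ne)
  have hopen : IsOpen (lens ∩ ball 0 r) := isOpen_lens.inter isOpen_ball
  have hderiv : ∀ z ∈ lens ∩ ball 0 r, HasDerivAt (fun z ↦ h z / u z) 0 z := fun z hz ↦ by
    have := (hh z hz.1).differentiableAt.hasDerivAt.fun_div (hu z hz.1).differentiableAt.hasDerivAt
      (hr_ne z hz.2)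
    rwa [wronskian_eq_zero_of_tendsto_ofReal hu hu₀ hu_cont hu_ne hh hh₀ hlim hz.1, zero_div]
      at this
  obtain ⟨k, hk⟩ := hopen.exists_is_const_of_deriv_eq_zero
    (convex_lens.inter (convex_ball _ _)).isPreconnected
    (fun z hz ↦ (hderiv z hz).differentiableAt.differentiableWithinAt)
    (fun z hz ↦ (hderiv z hz).deriv)
  have hev : ∀ᶠ t : ℝ in 𝓝[>] 0, (t : ℂ) ∈ lens ∩ ball 0 r :=
    eventually_ofReal_mem_lens.and (tendsto_ofReal_nhdsGT_zero.eventually (ball_mem_nhds 0 hr))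
  have hk₀ : k = 0 := by
    have hquot := hlim.div (hu_cont.tendsto.comp tendsto_ofReal_nhdsGT_zero) hu_ne
    rw [zero_div] at hquot
    exact tendsto_nhds_unique_of_eventuallyEq tendsto_const_nhds hquot
      (hev.mono fun t ht ↦ (hk t ht).symm)
  obtain ⟨t, ht⟩ := hev.exists
  refine hh.eqOn_zero_of_preconnected_of_eventuallyEq_zero convex_lens.isPreconnected ht.1 ?_
  filter_upwards [hopen.mem_nhds ht] with z hz
  simpa [hk₀, hr_ne z hz.2] using hk z hz

end Uniqueness

section GaussDigammaIntegral

open Filter Topology MeasureTheory Set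

variable {b s : ℂ}

theorem ae_ofReal_ne_one : ∀ᵐ t : ℝ, (1 : ℂ) - t ≠ 0 := by
  filter_upwards [Measure.ae_ne volume (1 : ℝ)] with t ht
  exact sub_ne_zero.2 (mod_cast ht.symm)

theorem intervalIntegrable_digamma_kernel_zero_half (hb : 0 < b.re) :
    IntervalIntegrable (fun t : ℝ ↦ ((t : ℂ) ^ (b - 1) - 1) / (1 - t)) volume 0 (1 / 2) := by
  simp only [div_eq_mul_inv (_ - _)]
  refine IntervalIntegrable.mul_continuousOn ?_ ?_
  · exact (intervalIntegral.intervalIntegrable_cpow' (by simpa using hb)).sub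
      intervalIntegrable_const
  · refine ContinuousOn.inv₀ (by fun_prop) fun t ht ↦ sub_ne_zero.2 ?_
    rw [uIcc_of_le (by norm_num)] at ht
    have : t ≠ 1 := by linarith [ht.2]
    exact mod_cast this.symm

theorem intervalIntegrable_digamma_kernel_half_one (b : ℂ) :
    IntervalIntegrable (fun t : ℝ ↦ ((t : ℂ) ^ (b - 1) - 1) / (1 - t)) volume (1 / 2) 1 := by
  set φ : ℝ → ℂ := fun t ↦ (t : ℂ) ^ (b - 1) with hφ
  have hdiff : DifferentiableOn ℝ φ (Ioi 0) := fun t ht ↦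
    (((hasDerivAt_id (t : ℂ)).cpow_const
      (ofReal_mem_slitPlane.2 ht)).comp_ofReal.differentiableAt).differentiableWithinAt
  have hcont : ContinuousOn (dslope φ 1) (Ioi 0) :=
    (continuousOn_dslope (Ioi_mem_nhds one_pos)).2 ⟨hdiff.continuousOn,
      hdiff.differentiableAt (Ioi_mem_nhds one_pos)⟩
  have hsub : uIcc (1 / 2 : ℝ) 1 ⊆ Ioi 0 := by
    rw [uIcc_of_le (by norm_num)]
    exact fun t ht ↦ lt_of_lt_of_le (by norm_num) ht.1
  refine (hcont.mono hsub).intervalIntegrable.neg.congr_ae ?_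
  filter_upwards [ae_restrict_of_ae ae_ofReal_ne_one] with t ht
  have ht₁ : t ≠ 1 := fun h ↦ ht (by simp [h])
  have ht' : (t : ℂ) - 1 ≠ 0 := by rwa [← neg_sub, neg_ne_zero]
  simp only [Pi.neg_apply, dslope_of_ne _ ht₁, slope_def_module, hφ, real_smul, ofReal_one,
    one_cpow, ofReal_inv, ofReal_sub]
  field_simp
  ring

theorem intervalIntegrable_digamma_kernel (hb : 0 < b.re) :
    IntervalIntegrable (fun t : ℝ ↦ ((t : ℂ) ^ (b - 1) - 1) / (1 - t)) volume 0 1 :=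
  (intervalIntegrable_digamma_kernel_zero_half hb).trans
    (intervalIntegrable_digamma_kernel_half_one b)

theorem tendsto_integral_digamma_kernel_mul (hb : 0 < b.re) {l : Filter ℝ}
    [l.IsCountablyGenerated] {k : ℝ → ℝ → ℂ} (hmeas : ∀ᶠ s in l, Measurable (k s))
    (hbound : ∀ᶠ s in l, ∀ t ∈ Ioo (0 : ℝ) 1, ‖k s t‖ ≤ 1)
    (hlim : ∀ t ∈ Ioo (0 : ℝ) 1, Tendsto (fun s ↦ k s t) l (𝓝 1)) :
    Tendsto (fun s ↦ ∫ t : ℝ in 0..1, ((t : ℂ) ^ (b - 1) - 1) / (1 - t) * k s t) l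
      (𝓝 (∫ t : ℝ in 0..1, ((t : ℂ) ^ (b - 1) - 1) / (1 - t))) := by
  have hint := intervalIntegrable_digamma_kernel hb
  have hmem : ∀ᵐ t : ℝ, t ∈ uIoc (0 : ℝ) 1 → t ∈ Ioo (0 : ℝ) 1 := by
    filter_upwards [Measure.ae_ne volume (1 : ℝ)] with t ht htI
    rw [uIoc_of_le zero_le_one] at htI
    exact ⟨htI.1, htI.2.lt_of_ne ht⟩
  refine intervalIntegral.tendsto_integral_filter_of_dominated_convergence _ ?_ ?_ hint.norm ?_
  · filter_upwards [hmeas] with s hs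
    exact hint.def'.aestronglyMeasurable.mul hs.aestronglyMeasurable
  · filter_upwards [hbound] with s hs
    filter_upwards [hmem] with t ht htI
    simpa only [norm_mul] using mul_le_of_le_one_right (norm_nonneg _) (hs t (ht htI))
  · filter_upwards [hmem] with t ht htI
    simpa using (hlim t (ht htI)).const_mul (((t : ℂ) ^ (b - 1) - 1) / (1 - t))

theorem integral_digamma_kernel_mul_one_sub_cpow (hb : 0 < b.re) (hs : 0 < s.re) :
    ∫ t : ℝ in 0..1, ((t : ℂ) ^ (b - 1) - 1) / (1 - t) * (1 - (t : ℂ)) ^ s =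
      betaIntegral b s - betaIntegral 1 s := by
  rw [betaIntegral, betaIntegral, ← intervalIntegral.integral_sub
    (betaIntegral_convergent hb hs) (betaIntegral_convergent (by simp) hs)]
  refine intervalIntegral.integral_congr_ae ?_
  filter_upwards [ae_ofReal_ne_one] with t ht _
  rw [cpow_sub _ _ ht, cpow_one, sub_self, cpow_zero]
  ring

theorem hasDerivAt_Gamma_add_inv (hb : ∀ n : ℕ, b ≠ -n) :
    HasDerivAt (fun s ↦ (Gamma (b + s))⁻¹) (-(digammaC b / Gamma b)) 0 := by
  have h : HasDerivAt Gamma (deriv Gamma b) (b + 0) := by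
    simpa using (differentiableAt_Gamma b hb).hasDerivAt
  have hne : Gamma (b + 0) ≠ 0 := by simpa using Gamma_ne_zero hb
  refine ((h.comp_const_add b 0).fun_inv hne).congr_deriv ?_
  rw [add_zero, digammaC]
  ring

theorem tendsto_betaIntegral_sub_betaIntegral_one (hb : 0 < b.re) :
    Tendsto (fun s : ℝ ↦ betaIntegral b s - betaIntegral 1 s) (𝓝[>] 0)
      (𝓝 (digammaC 1 - digammaC b)) := by
  have hΓb : Gamma b ≠ 0 := Gamma_ne_zero_of_re_pos hb
  have hderiv : HasDerivAt (fun s ↦ Gamma b * (Gamma (b + s))⁻¹ - (Gamma (1 + s))⁻¹)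
      (digammaC 1 - digammaC b) 0 := by
    refine (((hasDerivAt_Gamma_add_inv (ne_neg_natCast_of_re_pos hb)).const_mul _).sub
      (hasDerivAt_Gamma_add_inv (ne_neg_natCast_of_re_pos (by simp)))).congr_deriv ?_
    rw [Gamma_one]
    field_simp
    ring
  have hslope := hderiv.tendsto_slope.comp tendsto_ofReal_nhdsGT_zero_nhdsNE
  have hΓ : Tendsto (fun s : ℝ ↦ s * Gamma s) (𝓝[>] 0) (𝓝 1) :=
    tendsto_self_mul_Gamma_nhds_zero.comp tendsto_ofReal_nhdsGT_zero_nhdsNE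
  rw [← one_mul (_ - _)]
  refine (hΓ.mul hslope).congr' ?_
  filter_upwards [self_mem_nhdsWithin] with s (hs : 0 < s)
  have hs' : 0 < (s : ℂ).re := by simpa using hs
  have hs₀ : (s : ℂ) ≠ 0 := ne_zero_of_re_pos hs'
  rw [betaIntegral_eq_Gamma_mul_div _ _ hb hs', betaIntegral_eq_Gamma_mul_div _ _ (by simp) hs',
    Gamma_one]
  simp only [Function.comp_apply, slope_def_field, add_zero, ne_eq, hΓb, not_false_eq_true,
    mul_inv_cancel₀, Gamma_one, inv_one, sub_self, sub_zero, one_mul]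
  field_simp

theorem integral_digamma_kernel (hb : 0 < b.re) :
    ∫ t : ℝ in 0..1, ((t : ℂ) ^ (b - 1) - 1) / (1 - t) = digammaC 1 - digammaC b := by
  refine tendsto_nhds_unique (tendsto_integral_digamma_kernel_mul hb (l := 𝓝[>] 0)
    (k := fun s t ↦ (1 - (t : ℂ)) ^ (s : ℂ)) ?_ ?_ ?_)
    ((tendsto_betaIntegral_sub_betaIntegral_one hb).congr' ?_)
  · exact .of_forall fun s ↦ by fun_prop
  · filter_upwards [self_mem_nhdsWithin] with s (hs : 0 < s) t ht
    rw [← ofReal_one, ← ofReal_sub, norm_cpow_eq_rpow_re_of_pos (sub_pos.2 ht.2), ofReal_re]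
    exact Real.rpow_le_one (sub_pos.2 ht.2).le (by linarith [ht.1]) hs.le
  · intro t ht
    have ht' : (1 : ℂ) - t ≠ 0 := sub_ne_zero.2 (mod_cast ht.2.ne')
    have hcont : Continuous fun s : ℝ ↦ (1 - (t : ℂ)) ^ (s : ℂ) :=
      continuous_ofReal.const_cpow (.inl ht')
    exact (hcont.tendsto' 0 1 (by simp)).mono_left nhdsWithin_le_nhds
  · filter_upwards [self_mem_nhdsWithin] with s (hs : 0 < s)
    exact (integral_digamma_kernel_mul_one_sub_cpow hb (by simpa using hs)).symm

end GaussDigammaIntegral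

section EulerIntegral

open FormalMultilinearSeries Filter Topology MeasureTheory Set Polynomial

variable {a b d w : ℂ}

theorem ringChoose_add_natCast_sub_one (a : ℂ) (n : ℕ) :
    Ring.choose (a + n - 1) n = (ascPochhammer ℂ n).eval a / n.factorial := by
  rw [eq_div_iff (mod_cast n.factorial_ne_zero), mul_comm, ← nsmul_eq_mul, ← Ring.multichoose_eq,
    Ring.factorial_nsmul_multichoose_eq_ascPochhammer, ascPochhammer_smeval_eq_eval]

theorem hasFPowerSeriesOnBall_one_sub_cpow_neg (a : ℂ) :
    HasFPowerSeriesOnBall (fun z ↦ (1 - z) ^ (-a))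
      (ofScalars ℂ fun n ↦ (ascPochhammer ℂ n).eval a / n.factorial) 0 1 := by
  simpa only [ringChoose_add_natCast_sub_one, one_div, ← cpow_neg] using
    one_div_one_sub_cpow_hasFPowerSeriesOnBall_zero a

theorem betaIntegral_add_natCast (hb : 0 < b.re) (hd : 0 < d.re) (n : ℕ) :
    betaIntegral (b + n) d =
      betaIntegral b d * ((ascPochhammer ℂ n).eval b / (ascPochhammer ℂ n).eval (b + d)) := by
  have hbn : 0 < (b + n).re := by simpa using add_pos_of_pos_of_nonneg hb n.cast_nonneg
  have hbd : 0 < (b + d).re := by simpa using add_pos hb hd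
  rw [betaIntegral_eq_Gamma_mul_div _ _ hbn hd, betaIntegral_eq_Gamma_mul_div _ _ hb hd,
    ← Gamma_add_nat_div_Gamma_eq b (ne_neg_natCast_of_re_pos hb),
    ← Gamma_add_nat_div_Gamma_eq (b + d) (ne_neg_natCast_of_re_pos hbd), add_right_comm]
  field [Gamma_ne_zero_of_re_pos hb, Gamma_ne_zero_of_re_pos hbd]

theorem integral_cpow_mul_mul_pow (b d w : ℂ) (n : ℕ) :
    ∫ t : ℝ in 0..1, (t : ℂ) ^ (b - 1) * (1 - (t : ℂ)) ^ (d - 1) * (w * t) ^ n =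
      w ^ n * betaIntegral (b + n) d := by
  rw [betaIntegral, ← intervalIntegral.integral_const_mul]
  refine intervalIntegral.integral_congr_ae (.of_forall fun t ht ↦ ?_)
  rw [uIoc_of_le zero_le_one] at ht
  have ht₀ : (t : ℂ) ≠ 0 := mod_cast ht.1.ne'
  rw [add_sub_right_comm, cpow_add _ _ ht₀, cpow_natCast, mul_pow]
  ring

theorem hasSum_integral_cpow_mul_one_sub_mul_cpow_neg (a : ℂ) (hb : 0 < b.re) (hd : 0 < d.re)
    (hw : ‖w‖ < 1) :
    HasSum (fun n ↦ (ascPochhammer ℂ n).eval a / n.factorial * (w ^ n * betaIntegral (b + n) d))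
      (∫ t : ℝ in 0..1,
        (t : ℂ) ^ (b - 1) * (1 - (t : ℂ)) ^ (d - 1) * (1 - w * t) ^ (-a)) := by
  set e : ℕ → ℂ := fun n ↦ (ascPochhammer ℂ n).eval a / n.factorial
  set k : ℝ → ℂ := fun t ↦ (t : ℂ) ^ (b - 1) * (1 - (t : ℂ)) ^ (d - 1)
  have hk : IntervalIntegrable k volume 0 1 := betaIntegral_convergent hb hd
  have hseries := hasFPowerSeriesOnBall_one_sub_cpow_neg a
  have hsum : Summable fun n ↦ ‖e n‖ * ‖w‖ ^ n := by
    simpa [e] using summable_norm_mul_pow _ (r := ‖w‖₊)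
      (lt_of_lt_of_le (by simpa [← NNReal.coe_lt_coe] using hw) hseries.r_le)
  have hnorm : ∀ t ∈ uIoc (0 : ℝ) 1, ‖w * t‖ ≤ ‖w‖ := fun t ht ↦ by
    rw [uIoc_of_le zero_le_one] at ht
    rw [norm_mul, norm_real, Real.norm_of_nonneg ht.1.le]
    exact mul_le_of_le_one_right (norm_nonneg w) ht.2
  refine (intervalIntegral.hasSum_integral_of_dominated_convergence
    (F := fun n t ↦ k t * (e n * (w * t) ^ n)) (fun n t ↦ ‖k t‖ * (‖e n‖ * ‖w‖ ^ n))
    (fun n ↦ ?_) (fun n ↦ .of_forall fun t ht ↦ ?_) (.of_forall fun t _ ↦ hsum.mul_left _) ?_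
    (.of_forall fun t ht ↦ ?_)).congr_fun fun n ↦ ?_
  · exact hk.def'.aestronglyMeasurable.mul (Continuous.aestronglyMeasurable (by fun_prop))
  · rw [norm_mul (k t), norm_mul (e n), norm_pow]
    gcongr
    exact hnorm t ht
  · simpa only [tsum_mul_left] using hk.norm.mul_const _
  · refine (hasSum_of_hasFPowerSeriesOnBall_ofScalars hseries ?_).mul_left (k t)
    exact mem_eball_zero_one_iff.2 ((hnorm t ht).trans_lt hw)
  · rw [← integral_cpow_mul_mul_pow, ← intervalIntegral.integral_const_mul]
    exact intervalIntegral.integral_congr fun t _ ↦ by simp only [k]; ring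

theorem integral_cpow_mul_one_sub_mul_cpow_neg (a : ℂ) (hb : 0 < b.re) (hd : 0 < d.re)
    (hw : ‖w‖ < 1) :
    ∫ t : ℝ in 0..1, (t : ℂ) ^ (b - 1) * (1 - (t : ℂ)) ^ (d - 1) * (1 - w * t) ^ (-a) =
      betaIntegral b d * hyp2F1 a b (b + d) w := by
  rw [← (hasSum_integral_cpow_mul_one_sub_mul_cpow_neg a hb hd hw).tsum_eq, hyp2F1,
    ← tsum_mul_left]
  refine tsum_congr fun n ↦ ?_
  rw [betaIntegral_add_natCast hb hd]
  simp only [div_eq_mul_inv, mul_inv]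
  ring

end EulerIntegral
section Asymptotics

open Filter Topology MeasureTheory Set

variable {a b w : ℂ}

theorem intervalIntegrable_betaIntegral_mul_one_sub_mul_cpow (ha : 0 < a.re) (hb : 0 < b.re)
    (s : ℂ) (hw : ‖w‖ < 1) :
    IntervalIntegrable
      (fun t : ℝ ↦ (t : ℂ) ^ (a - 1) * (1 - (t : ℂ)) ^ (b - 1) * (1 - w * t) ^ s) volume 0 1 := by
  refine (betaIntegral_convergent ha hb).mul_continuousOn fun t ht ↦ ?_
  rw [uIcc_of_le zero_le_one] at ht
  have hslit : 1 - w * t ∈ slitPlane := by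
    rw [sub_eq_add_neg]
    refine mem_slitPlane_of_norm_lt_one ?_
    rw [norm_neg, norm_mul, norm_real, Real.norm_of_nonneg ht.1]
    exact mul_lt_one_of_nonneg_of_lt_one_left (norm_nonneg w) hw ht.2
  exact (ContinuousAt.cpow (f := fun t : ℝ ↦ 1 - w * t) (by fun_prop) continuousAt_const
    hslit).continuousWithinAt

theorem integral_digamma_kernel_mul_cpow_div (ha : 0 < a.re) (hb : 0 < b.re) (hw : ‖w‖ < 1) :
    ∫ t : ℝ in 0..1, ((t : ℂ) ^ (b - 1) - 1) / (1 - t) *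
        ((1 - (t : ℂ)) ^ a * (1 - w * t) ^ (-a)) =
      betaIntegral b a * hyp2F1 a b (b + a) w - betaIntegral 1 a * hyp2F1 a 1 (1 + a) w := by
  have h₁ : 0 < (1 : ℂ).re := by simp
  rw [← integral_cpow_mul_one_sub_mul_cpow_neg a hb ha hw,
    ← integral_cpow_mul_one_sub_mul_cpow_neg a h₁ ha hw, ← intervalIntegral.integral_sub
      (intervalIntegrable_betaIntegral_mul_one_sub_mul_cpow hb ha _ hw)
      (intervalIntegrable_betaIntegral_mul_one_sub_mul_cpow h₁ ha _ hw)]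
  refine intervalIntegral.integral_congr_ae ?_
  filter_upwards [ae_ofReal_ne_one] with t ht _
  rw [cpow_sub _ _ ht, cpow_one, sub_self, cpow_zero]
  ring

theorem norm_one_sub_cpow_mul_one_sub_mul_cpow_neg_le_one (ha : 0 ≤ a.re) {s t : ℝ}
    (hs : s ≤ 1) (ht : t ∈ Ioo (0 : ℝ) 1) :
    ‖(1 - (t : ℂ)) ^ a * (1 - (s : ℂ) * t) ^ (-a)‖ ≤ 1 := by
  have hst : s * t ≤ t := mul_le_of_le_one_left ht.1.le hs
  have ht' : 0 < 1 - t := sub_pos.2 ht.2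
  have hst' : 0 < 1 - s * t := by linarith
  rw [← ofReal_mul, ← ofReal_one, ← ofReal_sub, ← ofReal_sub, norm_mul,
    norm_cpow_eq_rpow_re_of_pos ht', norm_cpow_eq_rpow_re_of_pos hst', neg_re,
    Real.rpow_neg hst'.le]
  exact mul_inv_le_one_of_le₀ (Real.rpow_le_rpow ht'.le (by linarith) ha) (by positivity)

theorem tendsto_one_sub_cpow_mul_one_sub_mul_cpow_neg (a : ℂ) {t : ℝ} (ht : t < 1) :
    Tendsto (fun s : ℝ ↦ (1 - (t : ℂ)) ^ a * (1 - (s : ℂ) * t) ^ (-a)) (𝓝 1) (𝓝 1) := by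
  have hslit : 1 - ((1 : ℝ) : ℂ) * t ∈ slitPlane := by
    rw [ofReal_one, one_mul, ← ofReal_one, ← ofReal_sub]
    exact ofReal_mem_slitPlane.2 (sub_pos.2 ht)
  have hcont : ContinuousAt (fun s : ℝ ↦ (1 - (t : ℂ)) ^ a * (1 - (s : ℂ) * t) ^ (-a)) 1 :=
    continuousAt_const.mul (ContinuousAt.cpow (by fun_prop) continuousAt_const hslit)
  have ht₀ : (1 : ℂ) - t ≠ 0 := sub_ne_zero.2 (mod_cast ht.ne')
  simpa [← cpow_add _ _ ht₀] using hcont.tendsto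

theorem tendsto_betaIntegral_mul_hyp2F1_sub (ha : 0 < a.re) (hb : 0 < b.re) :
    Tendsto (fun w : ℝ ↦
        betaIntegral b a * hyp2F1 a b (b + a) w - betaIntegral 1 a * hyp2F1 a 1 (1 + a) w)
      (𝓝[<] 1) (𝓝 (digammaC 1 - digammaC b)) := by
  rw [← integral_digamma_kernel hb]
  refine (tendsto_integral_digamma_kernel_mul hb
    (k := fun s t ↦ (1 - (t : ℂ)) ^ a * (1 - (s : ℂ) * t) ^ (-a))
    (.of_forall fun s ↦ by fun_prop) ?_ fun t ht ↦
      (tendsto_one_sub_cpow_mul_one_sub_mul_cpow_neg a ht.2).mono_left nhdsWithin_le_nhds).congr' ?_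
  · filter_upwards [self_mem_nhdsWithin] with s (hs : s < 1) t ht
    exact norm_one_sub_cpow_mul_one_sub_mul_cpow_neg_le_one ha.le hs.le ht
  · filter_upwards [Ioo_mem_nhdsLT one_pos] with s hs
    exact integral_digamma_kernel_mul_cpow_div ha hb (by simpa [abs_of_pos hs.1] using hs.2)

theorem mul_hyp2F1_one_one_two (hw : ‖w‖ < 1) : w * hyp2F1 1 1 2 w = -log (1 - w) := by
  rw [← (hasSum_taylorSeries_neg_log' hw).tsum_eq, hyp2F1, ← tsum_mul_left]
  refine tsum_congr fun n ↦ ?_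
  have heval : (ascPochhammer ℂ n).eval 2 = (n + 1).factorial := by
    rw [← ascPochhammer_eval_one, ascPochhammer_succ_left]
    simp [one_add_one_eq_two]
  have hfact : (n.factorial : ℂ) ≠ 0 := mod_cast n.factorial_ne_zero
  rw [ascPochhammer_eval_one, heval, Nat.factorial_succ, Nat.cast_mul, Nat.cast_add_one]
  field_simp
  ring

theorem tendsto_betaIntegral_mul_hyp2F1_add_log (ha : 0 < a.re) (hb : 0 < b.re) :
    Tendsto (fun w : ℝ ↦ betaIntegral a b * hyp2F1 a b (a + b) w + log (1 - w) / w)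
      (𝓝[<] 1) (𝓝 (2 * digammaC 1 - digammaC a - digammaC b)) := by
  have h₁ : 0 < (1 : ℂ).re := by simp
  have hlim := (tendsto_betaIntegral_mul_hyp2F1_sub ha hb).add
    (tendsto_betaIntegral_mul_hyp2F1_sub h₁ ha)
  rw [show digammaC 1 - digammaC b + (digammaC 1 - digammaC a) =
    2 * digammaC 1 - digammaC a - digammaC b by ring] at hlim
  refine hlim.congr' ?_
  filter_upwards [Ioo_mem_nhdsLT one_pos] with w hw
  have hw₀ : (w : ℂ) ≠ 0 := mod_cast hw.1.ne'
  have hlog := mul_hyp2F1_one_one_two (w := w) (by simpa [abs_of_pos hw.1] using hw.2)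
  rw [betaIntegral_symm a b, betaIntegral_symm a 1, hyp2F1_comm 1 a, add_comm b a, add_comm 1 a,
    betaIntegral_eval_one_right h₁, one_add_one_eq_two, ← neg_eq_iff_eq_neg.2 hlog]
  field_simp
  ring

end Asymptotics

section Connection

open Filter Topology Asymptotics

variable {a b z : ℂ}

theorem tendsto_log_mul_of_differentiableAt {f : ℂ → ℂ} (hf : DifferentiableAt ℂ f 0)
    (hf₀ : f 0 = 0) : Tendsto (fun t : ℝ ↦ log t * f t) (𝓝[>] 0) (𝓝 0) := by
  have hlog : Tendsto (fun t : ℝ ↦ log t * t) (𝓝[>] 0) (𝓝 0) := by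
    have h : Tendsto (fun t : ℝ ↦ Real.log t * t) (𝓝[>] 0) (𝓝 0) := by
      simpa using tendsto_log_mul_rpow_nhdsGT_zero one_pos
    refine ((continuous_ofReal.tendsto' 0 0 ofReal_zero).comp h).congr' ?_
    filter_upwards [self_mem_nhdsWithin] with t (ht : 0 < t)
    simp [ofReal_log ht.le]
  have hO : (fun t : ℝ ↦ f t) =O[𝓝[>] 0] fun t ↦ (t : ℂ) := by
    simpa [Function.comp_def, hf₀] using hf.isBigO_sub.comp_tendsto tendsto_ofReal_nhdsGT_zero
  exact ((isBigO_refl (fun t : ℝ ↦ log t) _).mul hO).trans_tendsto hlog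

theorem logCompanion_zero (a b : ℂ) : logCompanion a b 0 = digammaFactor a b 0 := by
  rw [logCompanion, tsum_eq_single 0 (by simp +contextual)]
  simp

theorem tendsto_one_sub_nhdsGT_zero : Tendsto (fun t : ℝ ↦ 1 - t) (𝓝[>] 0) (𝓝[<] 1) := by
  refine tendsto_nhdsWithin_iff.2
    ⟨((continuous_const.sub continuous_id).tendsto' 0 1 (sub_zero 1)).mono_left
      nhdsWithin_le_nhds, ?_⟩
  filter_upwards [self_mem_nhdsWithin] with t (ht : 0 < t)
  simpa using ht

theorem tendsto_connection_nhdsGT_zero (ha : 0 < a.re) (hb : 0 < b.re) :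
    Tendsto (fun t : ℝ ↦ betaIntegral a b * hyp2F1 a b (a + b) (1 - t) +
      (log t * hyp2F1 a b 1 t + logCompanion a b t)) (𝓝[>] 0) (𝓝 0) := by
  have h₀ : (0 : ℂ) ∈ Metric.ball (0 : ℂ) 1 := Metric.mem_ball_self one_pos
  have hF := (tendsto_betaIntegral_mul_hyp2F1_add_log ha hb).comp tendsto_one_sub_nhdsGT_zero
  have hlog : Tendsto (fun t : ℝ ↦ log t * (hyp2F1 a b 1 t - (1 - (t : ℂ))⁻¹)) (𝓝[>] 0) (𝓝 0) :=
    tendsto_log_mul_of_differentiableAt (f := fun z ↦ hyp2F1 a b 1 z - (1 - z)⁻¹)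
      ((analyticOnNhd_hyp2F1 a b 1 0 h₀).differentiableAt.fun_sub
        (DifferentiableAt.fun_inv (by fun_prop) (by simp))) (by simp [hyp2F1_zero])
  have hv : Tendsto (fun t : ℝ ↦ logCompanion a b t) (𝓝[>] 0) (𝓝 (logCompanion a b 0)) :=
    (analyticOnNhd_logCompanion (ne_neg_natCast_of_re_pos ha) (ne_neg_natCast_of_re_pos hb) 0
      h₀).continuousAt.tendsto.comp tendsto_ofReal_nhdsGT_zero
  have hsum := (hF.add hlog).add hv
  have hlim : 2 * digammaC 1 - digammaC a - digammaC b + 0 + logCompanion a b 0 = 0 := by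
    simp only [logCompanion_zero, digammaFactor, Nat.cast_zero, add_zero]
    ring
  rw [hlim] at hsum
  refine hsum.congr fun t ↦ ?_
  simp only [Function.comp_apply, ofReal_sub, ofReal_one, sub_sub_cancel]
  ring

theorem betaIntegral_mul_hyp2F1_one_sub (ha : 0 < a.re) (hb : 0 < b.re) (hz : z ∈ lens) :
    betaIntegral a b * hyp2F1 a b (a + b) (1 - z) =
      -log z * hyp2F1 a b 1 z - logCompanion a b z := by
  suffices h : Set.EqOn (fun z ↦ betaIntegral a b * hyp2F1 a b (a + b) (1 - z) +
      (log z * hyp2F1 a b 1 z + logCompanion a b z)) 0 lens by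
    linear_combination (h hz).trans (Pi.zero_apply z)
  have ha' := ne_neg_natCast_of_re_pos ha
  have hb' := ne_neg_natCast_of_re_pos hb
  have hab' := ne_neg_natCast_of_re_pos (a := a + b) (by simpa using add_pos ha hb)
  have hu : AnalyticOnNhd ℂ (hyp2F1 a b 1) (Metric.ball 0 1) := analyticOnNhd_hyp2F1 a b 1
  have hF : AnalyticOnNhd ℂ (fun z ↦ betaIntegral a b * hyp2F1 a b (a + b) (1 - z)) lens :=
    fun z hz ↦ analyticAt_const.fun_mul <|
      (analyticOnNhd_hyp2F1 a b (a + b) _ (one_sub_mem_lens.2 hz).1).comp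
        (analyticAt_const.fun_sub analyticAt_id)
  have hL : AnalyticOnNhd ℂ (fun z ↦ log z * hyp2F1 a b 1 z + logCompanion a b z) lens :=
    fun z hz ↦ ((analyticAt_clog (lens_subset_slitPlane hz)).fun_mul (hu z hz.1)).fun_add
      (analyticOnNhd_logCompanion ha' hb' z hz.1)
  have h₀ : (0 : ℂ) ∈ Metric.ball (0 : ℂ) 1 := Metric.mem_ball_self one_pos
  refine eqOn_zero_of_hypergeometricOp_eq_zero_of_tendsto_ofReal (a := a) (b := b)
    (hu.mono Set.inter_subset_left) (fun z hz ↦ ?_) (hu 0 h₀).continuousAt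
    (by simp [hyp2F1_zero]) (fun z hz ↦ (hF z hz).fun_add (hL z hz)) (fun z hz ↦ ?_)
    (tendsto_connection_nhdsGT_zero ha hb)
  · exact hypergeometricOp_hyp2F1 (ne_neg_natCast_of_re_pos (by simp)) (by simpa using hz.1)
  · rw [hypergeometricOp_add (hF z hz) (hL z hz), hypergeometricOp_const_mul,
      hypergeometricOp_comp_one_sub, add_sub_cancel_right,
      hypergeometricOp_hyp2F1 hab' (by simpa using (one_sub_mem_lens.2 hz).1),
      hypergeometricOp_log_mul_hyp2F1_add_logCompanion ha' hb' (lens_subset_slitPlane hz)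
        (by simpa using hz.1), mul_zero, add_zero]

end Connection

theorem stmt12_general (α β : ℂ) (hα : 0 < α.re) (hβ : 0 < β.re) (w : ℂ)
    (hw : ‖w‖ < 1) (hw' : ‖1 - w‖ < 1) :
    hyp2F1 α β (α + β) w =
      Complex.Gamma (α + β) / (Complex.Gamma α * Complex.Gamma β) *
        (-(Complex.log (1 - w)) * hyp2F1 α β 1 (1 - w)
          - ∑' m : ℕ, (ascPochhammer ℂ m).eval α * (ascPochhammer ℂ m).eval β /
              ((Nat.factorial m : ℂ) ^ 2) *
              (digammaC (α + m) + digammaC (β + m) - 2 * digammaC (1 + m)) *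
              (1 - w) ^ m) := by
  have hmem : 1 - w ∈ lens := ⟨by simpa using hw', by simpa [dist_eq_norm] using hw⟩
  have h := betaIntegral_mul_hyp2F1_one_sub hα hβ hmem
  simp only [sub_sub_cancel, betaIntegral_eq_Gamma_mul_div _ _ hα hβ] at h
  have hΓα : Gamma α ≠ 0 := Gamma_ne_zero_of_re_pos hα
  have hΓβ : Gamma β ≠ 0 := Gamma_ne_zero_of_re_pos hβ
  have hΓ : Gamma (α + β) ≠ 0 := Gamma_ne_zero_of_re_pos (by simpa using add_pos hα hβ)
  change _ = _ * (_ - logCompanion α β (1 - w))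
  field_simp at h ⊢
  linear_combination h

theorem stmt12 (α β : ℂ) (hα : 0 < α.re) (hβ : 0 < β.re) (w : ℝ)
    (hw0 : 0 < w) (hw1 : w < 1) :
    hyp2F1 α β (α + β) w =
      Complex.Gamma (α + β) / (Complex.Gamma α * Complex.Gamma β) *
        (-(Complex.log (1 - w)) * hyp2F1 α β 1 (1 - w)
          - ∑' m : ℕ, (ascPochhammer ℂ m).eval α * (ascPochhammer ℂ m).eval β /
              ((Nat.factorial m : ℂ) ^ 2) *
              (digammaC (α + m) + digammaC (β + m) - 2 * digammaC (1 + m)) *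
              (1 - (w : ℂ)) ^ m) := by
  obtain ⟨hw, hw'⟩ := ofReal_mem_lens ⟨hw0, hw1⟩
  exact stmt12_general α β hα hβ w (by simpa using hw) (by simpa using mem_ball_iff_norm'.1 hw')
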